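/- There is an absolute constant c > 0 with the following property. For every finite family (D_i)_{i ∈ I} of closed disks in ℝ² with |I| = n ≥ 1, there exists a partition 𝒫 of the index set I such that: (a) each part P ∈ 𝒫 is stabbed, i.e. there is a point contained in every disk D_i with i ∈ P; and (b) for every point x ∈ ℝ², the number of parts P ∈ 𝒫 whose flower ⋃_{i∈P} D_i contains x is at most c · (log₂ n + 1). -/

import Mathlib

/-!
The disks are split into four classes, according to which of four shifted dyadic grids suits them.
The grids `⌊2 ^ k * (t / M - e / 3)⌋`, `e ∈ {0, 1}`, have at level `k` grid lines at mutual distance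
at least a third of the mesh `M / 2 ^ k`, so an interval of length at most a third of the mesh avoids
the lines of one of them (`exists_shift`). Choosing `e` separately in each coordinate, every disk
`D i` lies in a single cell of level `ℓ i` of one of the four grids, where the mesh at level `ℓ i` is
at most `12 * r i`.

Within one class the proof is a centroid recursion on the quadtree (`flowerCover_of_quadtree`).
Given fewer than `2 ^ (N + 1)` disks, let `C` be a deepest cell containing at least `2 ^ N` disks
of its own level or deeper. The disks that meet `C` and have level at most the level of `C` have radius
comparable to the side of `C` or larger, so boundedly many points stab all of them
(`exists_stabbing_grid`), and they form boundedly many parts. The other disks fall into groups: one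
for every child of `C`, and one for the disks outside `C`. Disks from different groups are disjoint
and every group has fewer than `2 ^ N` members, so each halving of the family costs only a constant
in the ply.

It is convenient to work with covers by stabbed sets instead of partitions; a cover is turned into a
partition at the end by assigning each index to one member of the cover containing it.
-/

open Metric

/-! ### Covers by stabbed sets -/

/-- The index set `S` is covered by finitely many subsets, each of them stabbed by a point, whose
flowers have ply at most `b`. -/
def HasFlowerCover {ι X : Type*} (D : ι → Set X) (S : Finset ι) (b : ℕ) : Prop :=
  ∃ F : Finset (Finset ι),
    (∀ Q ∈ F, Q ⊆ S ∧ ∃ p, ∀ i ∈ Q, p ∈ D i) ∧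
    (∀ i ∈ S, ∃ Q ∈ F, i ∈ Q) ∧
    ∀ x, {Q ∈ (F : Set (Finset ι)) | ∃ i ∈ Q, x ∈ D i}.ncard ≤ b

section Cover

variable {ι X γ : Type*} {D : ι → Set X}

open Classical in
lemma HasFlowerCover.union {S T : Finset ι} {b c : ℕ} (hS : HasFlowerCover D S b)
    (hT : HasFlowerCover D T c) : HasFlowerCover D (S ∪ T) (b + c) := by
  obtain ⟨F, hF1, hF2, hF3⟩ := hS
  obtain ⟨G, hG1, hG2, hG3⟩ := hT
  refine ⟨F ∪ G, ?_, ?_, ?_⟩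
  · intro Q hQ
    rcases Finset.mem_union.1 hQ with h | h
    · exact ⟨(hF1 Q h).1.trans Finset.subset_union_left, (hF1 Q h).2⟩
    · exact ⟨(hG1 Q h).1.trans Finset.subset_union_right, (hG1 Q h).2⟩
  · intro i hi
    rcases Finset.mem_union.1 hi with h | h
    · obtain ⟨Q, hQ, hiQ⟩ := hF2 i h
      exact ⟨Q, Finset.mem_union_left _ hQ, hiQ⟩
    · obtain ⟨Q, hQ, hiQ⟩ := hG2 i h
      exact ⟨Q, Finset.mem_union_right _ hQ, hiQ⟩
  · intro x
    have heq : {Q ∈ ((F ∪ G : Finset (Finset ι)) : Set (Finset ι)) | ∃ i ∈ Q, x ∈ D i} =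
        {Q ∈ (F : Set (Finset ι)) | ∃ i ∈ Q, x ∈ D i} ∪
        {Q ∈ (G : Set (Finset ι)) | ∃ i ∈ Q, x ∈ D i} := by
      ext Q
      simp only [Finset.coe_union, Set.mem_union, Set.mem_ofPred_eq]
      exact or_and_right
    rw [heq]
    exact (Set.ncard_union_le _ _).trans (Nat.add_le_add (hF3 x) (hG3 x))

open Classical in
lemma hasFlowerCover_of_stabbed {A : Finset ι} {K : ℕ} (T : Finset X) (hT : T.card ≤ K)
    (h : ∀ i ∈ A, ∃ p ∈ T, p ∈ D i) : HasFlowerCover D A K := by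
  refine ⟨T.image fun p => A.filter fun i => p ∈ D i, ?_, ?_, ?_⟩
  · intro Q hQ
    obtain ⟨p, -, rfl⟩ := Finset.mem_image.1 hQ
    exact ⟨Finset.filter_subset _ _, p, fun i hi => (Finset.mem_filter.1 hi).2⟩
  · intro i hi
    obtain ⟨p, hp, hpi⟩ := h i hi
    exact ⟨_, Finset.mem_image_of_mem _ hp, Finset.mem_filter.2 ⟨hi, hpi⟩⟩
  · intro x
    refine (Set.ncard_le_ncard (Set.sep_subset _ _) (Finset.finite_toSet _)).trans ?_
    rw [Set.ncard_coe_finset]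
    exact Finset.card_image_le.trans hT

open Classical in
/-- Groups of indices whose flowers are pairwise disjoint can be covered separately, without any
loss in the ply. -/
lemma hasFlowerCover_of_groups {S : Finset ι} {b : ℕ} (h : ι → γ)
    (hdisj : ∀ i ∈ S, ∀ j ∈ S, ∀ x, x ∈ D i → x ∈ D j → h i = h j)
    (hgrp : ∀ u, ∀ T ⊆ S, (∀ i ∈ T, h i = u) → HasFlowerCover D T b) :
    HasFlowerCover D S b := by
  choose F hF1 hF2 hF3 using fun u => hgrp u (S.filter fun i => h i = u)
    (Finset.filter_subset _ _) fun i hi => (Finset.mem_filter.1 hi).2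
  refine ⟨(S.image h).biUnion F, ?_, ?_, ?_⟩
  · intro Q hQ
    obtain ⟨u, -, hu⟩ := Finset.mem_biUnion.1 hQ
    exact ⟨(hF1 u Q hu).1.trans (Finset.filter_subset _ _), (hF1 u Q hu).2⟩
  · intro i hi
    obtain ⟨Q, hQ, hiQ⟩ := hF2 (h i) i (Finset.mem_filter.2 ⟨hi, rfl⟩)
    exact ⟨Q, Finset.mem_biUnion.2 ⟨h i, Finset.mem_image_of_mem _ hi, hQ⟩, hiQ⟩
  · intro x
    by_cases hx : ∃ i ∈ S, x ∈ D i
    · obtain ⟨i, hi, hxi⟩ := hx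
      -- only the group of `i` has a flower through `x`
      refine (Set.ncard_le_ncard ?_ ((F (h i)).finite_toSet.sep _)).trans (hF3 (h i) x)
      rintro Q ⟨hQ, j, hjQ, hxj⟩
      obtain ⟨u, -, hu⟩ := Finset.mem_biUnion.1 (Finset.mem_coe.1 hQ)
      have hj := Finset.mem_filter.1 ((hF1 u Q hu).1 hjQ)
      have huv : u = h i := hj.2.symm.trans (hdisj j hj.1 i hi x hxj hxi)
      exact ⟨by rw [← huv]; exact hu, j, hjQ, hxj⟩
    · have hempty : {Q ∈ (((S.image h).biUnion F : Finset (Finset ι)) : Set (Finset ι)) |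
          ∃ i ∈ Q, x ∈ D i} = ∅ := by
        rw [Set.eq_empty_iff_forall_notMem]
        rintro Q ⟨hQ, j, hjQ, hxj⟩
        obtain ⟨u, -, hu⟩ := Finset.mem_biUnion.1 (Finset.mem_coe.1 hQ)
        exact hx ⟨j, (Finset.mem_filter.1 ((hF1 u Q hu).1 hjQ)).1, hxj⟩
      rw [hempty]
      simp

/-! ### The centroid recursion on a quadtree -/

open Classical in
/-- The recursion in abstract form. `cell k x` names the cell of level `k` containing `x`, and
`D i` lies in one cell of level `ℓ i`. By `hstab`, boundedly many points stab all the sets of level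
at most `k` that meet a given cell of level `k`. -/
lemma flowerCover_of_quadtree (a : ι → X) (ha : ∀ i, a i ∈ D i) (ℓ : ι → ℕ) (cell : ℕ → X → γ)
    (hnest : ∀ k x y, cell (k + 1) x = cell (k + 1) y → cell k x = cell k y)
    (R : Finset ι) (hcell : ∀ i ∈ R, ∀ x ∈ D i, cell (ℓ i) x = cell (ℓ i) (a i)) (K : ℕ)
    (hstab : ∀ k u, ∃ T : Finset X, T.card ≤ K ∧
      ∀ i, ℓ i ≤ k → ∀ y ∈ D i, cell k y = u → ∃ p ∈ T, p ∈ D i) (N : ℕ) :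
    ∀ S ⊆ R, S.card < 2 ^ N → HasFlowerCover D S (K * N) := by
  have hnest' : ∀ k l, k ≤ l → ∀ x y, cell l x = cell l y → cell k x = cell k y := by
    intro k l hkl
    induction l, hkl using Nat.le_induction with
    | base => exact fun x y h => h
    | succ l _ ih => exact fun x y h => ih x y (hnest l x y h)
  have hcell' : ∀ i ∈ R, ∀ k ≤ ℓ i, ∀ x ∈ D i, cell k x = cell k (a i) :=
    fun i hi k hk x hx => hnest' k (ℓ i) hk _ _ (hcell i hi x hx)
  induction N with
  | zero =>
    intro S _ hS
    have hS0 : S = ∅ := by simpa using hS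
    subst hS0
    exact ⟨∅, by simp, by simp, by simp⟩
  | succ N ih =>
    intro S hSR hS
    let sub : ℕ → γ → Finset ι := fun k u => S.filter fun i => k ≤ ℓ i ∧ cell k (a i) = u
    by_cases hex : ∃ k, ∃ u, 2 ^ N ≤ (sub k u).card
    · -- `k` is the deepest level with a heavy cell
      have hbound : ∀ k, (∃ u, 2 ^ N ≤ (sub k u).card) → k ≤ S.sup ℓ := by
        rintro k ⟨u, hu⟩
        obtain ⟨i, hi⟩ := Finset.card_pos.1 (lt_of_lt_of_le (by positivity) hu)
        have hi' := Finset.mem_filter.1 hi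
        exact hi'.2.1.trans (Finset.le_sup (f := ℓ) hi'.1)
      obtain ⟨k0, hk0⟩ := hex
      obtain ⟨u, hu⟩ := Nat.findGreatest_spec
        (P := fun k => ∃ u, 2 ^ N ≤ (sub k u).card) (hbound k0 hk0) hk0
      set k := Nat.findGreatest (fun k => ∃ u, 2 ^ N ≤ (sub k u).card) (S.sup ℓ) with hk
      have hmax : ∀ v, (sub (k + 1) v).card < 2 ^ N := by
        intro v
        by_contra! hv
        have h1 := Nat.le_findGreatest (P := fun k => ∃ u, 2 ^ N ≤ (sub k u).card)
          (hbound (k + 1) ⟨v, hv⟩) ⟨v, hv⟩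
        omega
      let A := S.filter fun i => ℓ i ≤ k ∧ ∃ y ∈ D i, cell k y = u
      have hA : HasFlowerCover D A K := by
        obtain ⟨T, hT, hT'⟩ := hstab k u
        refine hasFlowerCover_of_stabbed T hT fun i hi => ?_
        obtain ⟨-, hik, y, hy, hyu⟩ := Finset.mem_filter.1 hi
        exact hT' i hik y hy hyu
      have hB : HasFlowerCover D (S \ A) (K * N) := by
        have hdeep : ∀ i ∈ S \ A, i ∈ sub k u → k + 1 ≤ ℓ i := by
          intro i hi hiu
          have hi' := Finset.mem_sdiff.1 hi
          have hiu' := Finset.mem_filter.1 hiu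
          by_contra! hlt
          exact hi'.2 (Finset.mem_filter.2 ⟨hi'.1, by omega, a i, ha i, hiu'.2.2⟩)
        -- sets inside the heavy cell and sets outside of it are disjoint
        have hsep : ∀ i ∈ S \ A, ∀ j ∈ S \ A, i ∈ sub k u → j ∉ sub k u →
            ∀ x, x ∈ D i → x ∉ D j := by
          intro i hi j hj hiu hju x hxi hxj
          have hi' := Finset.mem_sdiff.1 hi
          have hj' := Finset.mem_sdiff.1 hj
          have hiu' := Finset.mem_filter.1 hiu
          have hx : cell k x = u := (hcell' i (hSR hi'.1) k hiu'.2.1 x hxi).trans hiu'.2.2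
          rcases le_or_gt k (ℓ j) with hkj | hkj
          · exact hju (Finset.mem_filter.2 ⟨hj'.1, hkj,
              (hcell' j (hSR hj'.1) k hkj x hxj).symm.trans hx⟩)
          · exact hj'.2 (Finset.mem_filter.2 ⟨hj'.1, hkj.le, x, hxj, hx⟩)
        refine hasFlowerCover_of_groups
          (fun i => if i ∈ sub k u then some (cell (k + 1) (a i)) else none) ?_ ?_
        · intro i hi j hj x hxi hxj
          by_cases hiu : i ∈ sub k u <;> by_cases hju : j ∈ sub k u
          · have h1 := hcell' i (hSR (Finset.mem_sdiff.1 hi).1) _ (hdeep i hi hiu) x hxi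
            have h2 := hcell' j (hSR (Finset.mem_sdiff.1 hj).1) _ (hdeep j hj hju) x hxj
            simp only [hiu, hju, if_true, ← h1, ← h2]
          · exact absurd hxj (hsep i hi j hj hiu hju x hxi)
          · exact absurd hxi (hsep j hj i hi hju hiu x hxj)
          · simp only [hiu, hju, if_false]
        · intro v T hT hTv
          refine ih T ((hT.trans Finset.sdiff_subset).trans hSR) ?_
          cases v with
          | none =>
            have hsub : T ⊆ S \ sub k u := by
              intro i hi
              refine Finset.mem_sdiff.2 ⟨(Finset.mem_sdiff.1 (hT hi)).1, fun hiu => ?_⟩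
              have hi' := hTv i hi
              simp [hiu] at hi'
            have hc := Finset.card_le_card hsub
            have hc' := Finset.card_sdiff_add_card_eq_card
              (show sub k u ⊆ S from Finset.filter_subset _ _)
            rw [pow_succ] at hS
            omega
          | some v =>
            refine (Finset.card_le_card fun i hi => ?_).trans_lt (hmax v)
            have hi' := hTv i hi
            by_cases hiu : i ∈ sub k u
            · refine Finset.mem_filter.2 ⟨(Finset.mem_sdiff.1 (hT hi)).1,
                hdeep i (hT hi) hiu, ?_⟩
              simpa [hiu] using hi'
            · simp [hiu] at hi'
      have hAB := hA.union hB
      rw [Finset.union_sdiff_of_subset (Finset.filter_subset _ _)] at hAB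
      rwa [Nat.mul_succ, Nat.add_comm]
    · -- no cell is heavy: the cells of level `0` separate the family into small groups
      push Not at hex
      have hS0 : HasFlowerCover D S (K * N) := by
        refine hasFlowerCover_of_groups (fun i => cell 0 (a i)) ?_ ?_
        · intro i hi j hj x hxi hxj
          exact (hcell' i (hSR hi) 0 (Nat.zero_le _) x hxi).symm.trans
            (hcell' j (hSR hj) 0 (Nat.zero_le _) x hxj)
        · intro u T hT hTu
          refine ih T (hT.trans hSR) ?_
          refine (Finset.card_le_card fun i hi => ?_).trans_lt (hex 0 u)
          exact Finset.mem_filter.2 ⟨hT hi, Nat.zero_le _, hTu i hi⟩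
      obtain ⟨F, hF1, hF2, hF3⟩ := hS0
      exact ⟨F, hF1, hF2, fun x => (hF3 x).trans (Nat.mul_le_mul_left _ (Nat.le_succ _))⟩

end Cover

/-! ### Shifted dyadic grids -/

/-- The index of the grid interval of level `k` containing `t`, for the dyadic grid of mesh
`M / 2 ^ k` shifted by `M / 3` if `e` holds. -/
noncomputable def gridIndex (M : ℝ) (e : Bool) (k : ℕ) (t : ℝ) : ℤ :=
  ⌊2 ^ k * (t / M - (if e then 1 else 0) / 3)⌋

lemma gridIndex_nested (M : ℝ) (e : Bool) (k : ℕ) (s t : ℝ)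
    (h : gridIndex M e (k + 1) s = gridIndex M e (k + 1) t) :
    gridIndex M e k s = gridIndex M e k t := by
  have key : ∀ t, gridIndex M e k t = gridIndex M e (k + 1) t / 2 := by
    intro t
    unfold gridIndex
    generalize t / M - (if e then 1 else 0) / 3 = w
    have h1 : (2 : ℝ) ^ k * w = 2 ^ (k + 1) * w / ((2 : ℕ) : ℝ) := by
      push_cast
      ring
    rw [h1, Int.floor_div_natCast]
    rfl
  rw [key, key, h]

/-- If `v` is at most `1 / 3` above `lo` and has a different floor, then `⌊v⌋` is an integer in the
interval from `lo` (excluded) to `lo + 1 / 3`. -/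
lemma exists_int_between {lo v : ℝ} (h1 : lo ≤ v) (h2 : v ≤ lo + 1 / 3) (h : ⌊v⌋ ≠ ⌊lo⌋) :
    lo < ⌊v⌋ ∧ (⌊v⌋ : ℝ) ≤ lo + 1 / 3 := by
  refine ⟨?_, (Int.floor_le v).trans h2⟩
  have h3 : ⌊lo⌋ < ⌊v⌋ := lt_of_le_of_ne (Int.floor_mono h1) (Ne.symm h)
  exact Int.floor_lt.1 h3

/-- An interval of length at most a third of the mesh avoids the grid lines of the plain grid or
those of the shifted one, because `3` does not divide `2 ^ k`. -/
lemma exists_shift (M : ℝ) (hM : 0 < M) (k : ℕ) (a r : ℝ) (hr : 6 * r * 2 ^ k ≤ M) :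
    ∃ e : Bool, ∀ t, |t - a| ≤ r → gridIndex M e k t = gridIndex M e k a := by
  suffices hs : ∃ e : Bool, ∀ t, |t - a| ≤ r → gridIndex M e k t = gridIndex M e k (a - r) by
    obtain ⟨e, he⟩ := hs
    refine ⟨e, fun t ht => (he t ht).trans (he a ?_).symm⟩
    simpa using (abs_nonneg _).trans ht
  have hlo : ∀ t c : ℝ, |t - a| ≤ r → 2 ^ k * ((a - r) / M - c) ≤ 2 ^ k * (t / M - c) := by
    intro t c ht
    have := (abs_le.1 ht).1
    gcongr
    linarith
  have hhi : ∀ t c : ℝ, |t - a| ≤ r →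
      2 ^ k * (t / M - c) ≤ 2 ^ k * ((a - r) / M - c) + 1 / 3 := by
    intro t c ht
    have h1 := (abs_le.1 ht).2
    have h2 : 2 ^ k * (t / M - c) - 2 ^ k * ((a - r) / M - c) = 2 ^ k * (t - a + r) / M := by
      field_simp
      ring
    have h3 : 2 ^ k * (t - a + r) / M ≤ 1 / 3 := by
      rw [div_le_iff₀ hM]
      have : (2 : ℝ) ^ k * (t - a + r) ≤ 2 ^ k * (2 * r) := by
        gcongr
        linarith
      linarith
    linarith
  by_contra! hcon
  obtain ⟨s, hs, hs'⟩ := hcon false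
  obtain ⟨t, ht, ht'⟩ := hcon true
  obtain ⟨p1, p2⟩ := exists_int_between (hlo s _ hs) (hhi s _ hs) hs'
  obtain ⟨q1, q2⟩ := exists_int_between (hlo t _ ht) (hhi t _ ht) ht'
  generalize ⌊(2 : ℝ) ^ k * (s / M - (if false = true then 1 else 0) / 3)⌋ = m at p1 p2
  generalize ⌊(2 : ℝ) ^ k * (t / M - (if true = true then 1 else 0) / 3)⌋ = m' at q1 q2
  simp only [Bool.false_eq_true, if_true, if_false] at p1 p2 q1 q2
  have e1 : ((3 * m' + 2 ^ k - 3 * m : ℤ) : ℝ) < 1 := by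
    push_cast
    linarith
  have e2 : (-1 : ℝ) < ((3 * m' + 2 ^ k - 3 * m : ℤ) : ℝ) := by
    push_cast
    linarith
  have e3 : (3 * m' + 2 ^ k - 3 * m : ℤ) < 1 := by exact_mod_cast e1
  have e4 : -1 < (3 * m' + 2 ^ k - 3 * m : ℤ) := by exact_mod_cast e2
  have e5 : (3 : ℤ) ∣ 2 ^ k := ⟨m - m', by linarith⟩
  have e6 : (3 : ℤ) ∣ 2 := Int.prime_three.dvd_of_dvd_pow e5
  norm_num at e6

/-! ### Stabbing the large disks near a cell -/

/-- A disk of radius at least `ρ` containing `y` contains a disk of radius `ρ` containing `y`. -/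
lemma exists_inner_center {E : Type*} [NormedAddCommGroup E] [NormedSpace ℝ E] {a y : E}
    {r ρ : ℝ} (hρ : 0 < ρ) (hr : ρ ≤ r) (hy : dist y a ≤ r) :
    ∃ z, dist z y ≤ ρ ∧ dist z a ≤ r - ρ := by
  rcases le_or_gt (dist y a) ρ with h | h
  · exact ⟨a, by rwa [dist_comm], by simpa using hr⟩
  · have hd : 0 < dist y a := hρ.trans h
    refine ⟨AffineMap.lineMap y a (ρ / dist y a), ?_, ?_⟩
    · rw [dist_lineMap_left, Real.norm_of_nonneg (by positivity)]
      exact (div_mul_cancel₀ _ hd.ne').le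
    · rw [dist_lineMap_right, Real.norm_of_nonneg]
      · rw [sub_mul, div_mul_cancel₀ _ hd.ne', one_mul]
        linarith
      · rw [sub_nonneg, div_le_one hd]
        exact h.le

/-- The cell of level `k` containing `x` in the planar grid with shifts `e`. -/
noncomputable def gridCell (M : ℝ) (e : Bool × Bool) (k : ℕ) (x : EuclideanSpace ℝ (Fin 2)) :
    ℤ × ℤ :=
  (gridIndex M e.1 k (x 0), gridIndex M e.2 k (x 1))

/-- One coordinate of the choice of a grid point: with corner `q` of a cell of side `12 * ρ`,
a coordinate at distance at most `ρ` from the cell is within `ρ / 2` of one of `29` values. -/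
lemma exists_grid_coord {M ρ : ℝ} (hM : 0 < M) (hρ : 0 < ρ) (e : Bool) (k : ℕ)
    (hk : 12 * ρ * 2 ^ k = M) (u : ℤ) (y z : ℝ) (hy : gridIndex M e k y = u)
    (hz : |z - y| ≤ ρ) :
    ∃ m ∈ Finset.Icc (-2 : ℤ) 26,
      |(M * (if e then 1 else 0) / 3 + 12 * ρ * u + ρ / 2 * m) - z| ≤ ρ / 2 := by
  unfold gridIndex at hy
  generalize (if e then (1 : ℝ) else 0) = c at hy ⊢
  obtain ⟨h1, h2⟩ := Int.floor_eq_iff.1 hy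
  set q := M * c / 3 + 12 * ρ * u with hq
  have hP : (0 : ℝ) < 2 ^ k := by positivity
  have hyq : (2 : ℝ) ^ k * (y / M - c / 3) * (12 * ρ) = y - M * c / 3 := by
    have : (2 : ℝ) ^ k = M / (12 * ρ) := by
      rw [eq_div_iff (by positivity)]
      linarith
    rw [this]
    field_simp
  have h1' : q ≤ y := by
    have := mul_le_mul_of_nonneg_right h1 (by positivity : 0 ≤ 12 * ρ)
    linarith
  have h2' : y < q + 12 * ρ := by
    have := mul_lt_mul_of_pos_right h2 (by positivity : 0 < 12 * ρ)
    linarith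
  obtain ⟨hz1, hz2⟩ := abs_le.1 hz
  refine ⟨⌊(z - q) / (ρ / 2)⌋, ?_, ?_⟩
  · rw [Finset.mem_Icc]
    constructor
    · rw [Int.le_floor, le_div_iff₀ (by positivity)]
      push_cast
      linarith
    · rw [← Int.lt_add_one_iff, Int.floor_lt, div_lt_iff₀ (by positivity)]
      push_cast
      linarith
  · have f1 := Int.floor_le ((z - q) / (ρ / 2))
    have f2 := Int.lt_floor_add_one ((z - q) / (ρ / 2))
    rw [le_div_iff₀ (by positivity)] at f1
    rw [div_lt_iff₀ (by positivity)] at f2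
    rw [abs_le]
    constructor <;> linarith

open Classical in
/-- All disks of radius at least a twelfth of the mesh that meet a given cell are stabbed by
`29 ^ 2 = 841` points. -/
lemma exists_stabbing_grid {M : ℝ} (hM : 0 < M) (e : Bool × Bool) (k : ℕ) (u : ℤ × ℤ) :
    ∃ T : Finset (EuclideanSpace ℝ (Fin 2)), T.card ≤ 841 ∧
      ∀ (a : EuclideanSpace ℝ (Fin 2)) (r : ℝ), M ≤ 12 * r * 2 ^ k →
        ∀ y ∈ closedBall a r, gridCell M e k y = u → ∃ p ∈ T, p ∈ closedBall a r := by
  obtain ⟨ρ, hρ, hk⟩ : ∃ ρ : ℝ, 0 < ρ ∧ 12 * ρ * 2 ^ k = M :=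
    ⟨M / (12 * 2 ^ k), by positivity, by field_simp⟩
  refine ⟨(Finset.Icc (-2 : ℤ) 26 ×ˢ Finset.Icc (-2 : ℤ) 26).image fun m =>
    !₂[M * (if e.1 then 1 else 0) / 3 + 12 * ρ * u.1 + ρ / 2 * m.1,
      M * (if e.2 then 1 else 0) / 3 + 12 * ρ * u.2 + ρ / 2 * m.2], ?_, ?_⟩
  · refine Finset.card_image_le.trans ?_
    simp
  · intro a r hr y hy hyu
    have hρr : ρ ≤ r := by
      rw [← hk] at hr
      have := le_of_mul_le_mul_right hr (by positivity)
      linarith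
    obtain ⟨z, hzy, hza⟩ := exists_inner_center hρ hρr (mem_closedBall.1 hy)
    have hcoord : ∀ j, |z j - y j| ≤ ρ := by
      intro j
      have := PiLp.norm_apply_le (z - y) j
      rw [← dist_eq_norm] at this
      exact this.trans hzy
    obtain ⟨m1, hm1, hd1⟩ := exists_grid_coord hM hρ e.1 k hk u.1 (y 0) (z 0)
      (congrArg Prod.fst hyu) (hcoord 0)
    obtain ⟨m2, hm2, hd2⟩ := exists_grid_coord hM hρ e.2 k hk u.2 (y 1) (z 1)
      (congrArg Prod.snd hyu) (hcoord 1)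
    refine ⟨_, Finset.mem_image_of_mem _ (Finset.mk_mem_product hm1 hm2), ?_⟩
    rw [mem_closedBall]
    refine (dist_triangle _ z _).trans ?_
    have hpz : dist (!₂[M * (if e.1 then 1 else 0) / 3 + 12 * ρ * u.1 + ρ / 2 * m1,
        M * (if e.2 then 1 else 0) / 3 + 12 * ρ * u.2 + ρ / 2 * m2] :
        EuclideanSpace ℝ (Fin 2)) z ≤ ρ := by
      rw [EuclideanSpace.dist_eq, Fin.sum_univ_two]
      refine Real.sqrt_le_iff.2 ⟨hρ.le, ?_⟩
      simp only [Real.dist_eq, Matrix.cons_val_zero, Matrix.cons_val_one]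
      have s1 := pow_le_pow_left₀ (abs_nonneg _) hd1 2
      have s2 := pow_le_pow_left₀ (abs_nonneg _) hd2 2
      have := sq_nonneg ρ
      linarith
    linarith

/-! ### Assembling the partition -/

open Classical in
lemma flowerCover_disks {n N : ℕ} (hN : n < 2 ^ N) (a : Fin n → EuclideanSpace ℝ (Fin 2))
    (r : Fin n → ℝ) (hr : ∀ i, 0 < r i) :
    HasFlowerCover (fun i => closedBall (a i) (r i)) Finset.univ (4 * (841 * N)) := by
  obtain ⟨M, hM, hMr⟩ : ∃ M : ℝ, 0 < M ∧ ∀ i, 6 * r i ≤ M := by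
    refine ⟨6 * ∑ i, r i + 1, ?_, fun i => ?_⟩
    · have := Finset.sum_nonneg fun i (_ : i ∈ Finset.univ) => (hr i).le
      linarith
    · have := Finset.single_le_sum (fun i _ => (hr i).le) (Finset.mem_univ i)
      linarith
  have hlev : ∀ i, ∃ l : ℕ, 6 * r i * 2 ^ l ≤ M ∧ M ≤ 12 * r i * 2 ^ l := by
    intro i
    have h6 : 0 < 6 * r i := by linarith [hr i]
    obtain ⟨l, h1, h2⟩ := exists_nat_pow_near (x := M / (6 * r i)) (y := 2)
      ((one_le_div h6).2 (hMr i)) (by norm_num)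
    rw [le_div_iff₀ h6] at h1
    rw [div_lt_iff₀ h6, pow_succ] at h2
    exact ⟨l, by linarith, by linarith⟩
  choose ℓ hℓ1 hℓ2 using hlev
  have hcoord : ∀ i, ∀ x ∈ closedBall (a i) (r i), ∀ j, |x j - a i j| ≤ r i := by
    intro i x hx j
    have := PiLp.norm_apply_le (x - a i) j
    rw [← dist_eq_norm] at this
    exact this.trans (mem_closedBall.1 hx)
  have hshift : ∀ i, ∃ e : Bool × Bool, ∀ x ∈ closedBall (a i) (r i),
      gridCell M e (ℓ i) x = gridCell M e (ℓ i) (a i) := by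
    intro i
    obtain ⟨e1, he1⟩ := exists_shift M hM (ℓ i) (a i 0) (r i) (hℓ1 i)
    obtain ⟨e2, he2⟩ := exists_shift M hM (ℓ i) (a i 1) (r i) (hℓ1 i)
    exact ⟨(e1, e2), fun x hx => Prod.ext (he1 _ (hcoord i x hx 0)) (he2 _ (hcoord i x hx 1))⟩
  choose e he using hshift
  have hclass : ∀ s : Bool × Bool, HasFlowerCover (fun i => closedBall (a i) (r i))
      (Finset.univ.filter fun i => e i = s) (841 * N) := by
    intro s
    refine flowerCover_of_quadtree (D := fun i => closedBall (a i) (r i)) a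
      (fun i => mem_closedBall_self (hr i).le) ℓ (gridCell M s) ?_ _ ?_ 841 ?_ N _
      subset_rfl ?_
    · intro k x y hxy
      exact Prod.ext (gridIndex_nested _ _ _ _ _ (congrArg Prod.fst hxy))
        (gridIndex_nested _ _ _ _ _ (congrArg Prod.snd hxy))
    · intro i hi x hx
      have := he i x hx
      rwa [(Finset.mem_filter.1 hi).2] at this
    · intro k u
      obtain ⟨T, hT, hT'⟩ := exists_stabbing_grid hM s k u
      refine ⟨T, hT, fun i hik y hy hyu => hT' (a i) (r i) ((hℓ2 i).trans ?_) y hy hyu⟩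
      have := (hr i).le
      gcongr
      norm_num
    · refine lt_of_le_of_lt (Finset.card_le_univ _) ?_
      simpa using hN
  have h4 := (((hclass (false, false)).union (hclass (false, true))).union
    (hclass (true, false))).union (hclass (true, true))
  convert h4 using 1
  · ext i
    simp only [Finset.mem_univ, Finset.mem_union, Finset.mem_filter, true_and, true_iff]
    rcases e i with ⟨_ | _, _ | _⟩ <;> simp
  · ring

theorem stmt5 :
    ∃ c : ℝ, 0 < c ∧
      ∀ (n : ℕ), 1 ≤ n →
        ∀ (a : Fin n → EuclideanSpace ℝ (Fin 2)) (r : Fin n → ℝ),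
          (∀ i, 0 < r i) →
          ∃ Part : Finpartition (Finset.univ : Finset (Fin n)),
            (∀ P ∈ Part.parts, ∃ x : EuclideanSpace ℝ (Fin 2),
                ∀ i ∈ P, x ∈ closedBall (a i) (r i)) ∧
            (∀ x : EuclideanSpace ℝ (Fin 2),
              (({P : Finset (Fin n) | P ∈ Part.parts ∧ ∃ i ∈ P,
                  x ∈ closedBall (a i) (r i)}).ncard : ℝ)
                ≤ c * (Real.logb 2 n + 1)) := by
  classical
  refine ⟨4 * 841, by norm_num, fun n _ a r hr => ?_⟩
  obtain ⟨F, hF1, hF2, hF3⟩ := flowerCover_disks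
    (Nat.lt_pow_succ_log_self (b := 2) (by norm_num) n) a r hr
  choose q hqF hq using fun i => hF2 i (Finset.mem_univ i)
  have hparts : ∀ P ∈ (Finpartition.ofSetoid (Setoid.ker q)).parts, ∀ i ∈ P,
      P = Finset.univ.filter fun j => q j = q i := by
    intro P hP i hi
    rw [← Finpartition.part_eq_of_mem _ hP hi]
    ext j
    rw [Finpartition.mem_part_ofSetoid_iff_rel, Setoid.ker_def]
    simp [eq_comm]
  refine ⟨Finpartition.ofSetoid (Setoid.ker q), ?_, ?_⟩
  · intro P hP
    obtain ⟨i, hi⟩ := Finpartition.nonempty_of_mem_parts _ hP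
    obtain ⟨p, hp⟩ := (hF1 _ (hqF i)).2
    refine ⟨p, fun j hj => hp j ?_⟩
    rw [hparts P hP i hi] at hj
    rw [← (Finset.mem_filter.1 hj).2]
    exact hq j
  · intro x
    have hcard : {P : Finset (Fin n) | P ∈ (Finpartition.ofSetoid (Setoid.ker q)).parts ∧
        ∃ i ∈ P, x ∈ closedBall (a i) (r i)}.ncard ≤ 4 * (841 * (Nat.log 2 n + 1)) := by
      refine le_trans ?_ (hF3 x)
      have hfin : {Q ∈ (F : Set (Finset (Fin n))) | ∃ i ∈ Q, x ∈ closedBall (a i) (r i)}.Finite :=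
        F.finite_toSet.sep _
      -- the part of `i` is the fibre of `q` over the member `q i` of the cover
      refine (Set.ncard_le_ncard ?_ (hfin.image fun Q => Finset.univ.filter fun j => q j = Q)).trans
        (Set.ncard_image_le hfin)
      rintro P ⟨hP, i, hi, hxi⟩
      exact ⟨q i, ⟨hqF i, i, hq i, hxi⟩, (hparts P hP i hi).symm⟩
    have hlog : (Nat.log 2 n : ℝ) ≤ Real.logb 2 n := by
      exact_mod_cast Real.natLog_le_logb n 2
    calc _ ≤ ((4 * (841 * (Nat.log 2 n + 1)) : ℕ) : ℝ) := by exact_mod_cast hcard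
      _ = 4 * 841 * ((Nat.log 2 n : ℝ) + 1) := by
        push_cast
        ring
      _ ≤ _ := by gcongr
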